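/- Let g : ℤ → ℝ be bounded and let E ∈ ℝ satisfy δ(g) > 𝓛(E). Then E is not an eigenvalue of H_g: every u ∈ ℓ²(ℤ) satisfying u(n+1) + u(n−1) + g(n)u(n) = E·u(n) for all n ∈ ℤ is identically zero. -/

import Mathlib

noncomputable section

open Filter Real

def distToInt (x : ℝ) : ℝ := |x - round x|

def IsDiophantine (α : ℝ) : Prop :=
  ∃ κ τ : ℝ, 0 < κ ∧ 0 < τ ∧ ∀ k : ℤ, k ≠ 0 → τ / |(k : ℝ)| ^ κ ≤ distToInt (k * α)

def deltaPhase (α θ : ℝ) : ℝ :=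
  limsup (fun n : ℤ => -Real.log (distToInt (2 * θ + n * α)) / |(n : ℝ)|) cofinite

def amoPot (lam α θ : ℝ) : ℤ → ℝ := fun n => 2 * lam * Real.cos (2 * Real.pi * (θ + n * α))

def IsEigenfunction (g : ℤ → ℝ) (E : ℝ) (φ : ℤ → ℝ) : Prop :=
  ∀ n : ℤ, φ (n + 1) + φ (n - 1) + g n * φ n = E * φ n

def deltaPot (g : ℤ → ℝ) : ℝ :=
  limsup (fun n : ℤ => -Real.log (⨆ m : ℤ, |g (n - m) - g m|) / |(n : ℝ)|) cofinite

def matNorm (M : Matrix (Fin 2) (Fin 2) ℝ) : ℝ := ⨆ p : Fin 2 × Fin 2, |M p.1 p.2|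

def transfer (g : ℤ → ℝ) (E : ℝ) : ℕ → ℤ → Matrix (Fin 2) (Fin 2) ℝ
  | 0, _ => 1
  | n + 1, k => !![E - g (k + n), -1; 1, 0] * transfer g E n k

def LyapSup (g : ℤ → ℝ) (E : ℝ) : ℝ :=
  limsup (fun n : ℕ => ⨆ k : ℤ, Real.log (matNorm (transfer g E n k)) / n) atTop

def HasSULE (g : ℤ → ℝ) : Prop :=
  ∃ (Φ : HilbertBasis ℕ ℝ (lp (fun _ : ℤ => ℝ) 2)) (ns : ℕ → ℤ) (γ : ℝ),
    0 < γ ∧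
    (∀ s : ℕ, ∃ E : ℝ, IsEigenfunction g E (fun n => Φ s n)) ∧
    ∀ ε : ℝ, 0 < ε → ∃ C : ℝ,
      ∀ (s : ℕ) (n : ℤ),
        |Φ s n| ≤ C * Real.exp (ε * |(ns s : ℝ)|) * Real.exp (-γ * |(n : ℝ) - (ns s : ℝ)|)

/-!
If `u` is an `ℓ²` eigenfunction and the reflection `g (n - ·)` is within `exp (-c |n|)` of `g`, then
`u` and `u (n - ·)` solve almost the same equation. Their Wronskian vanishes at infinity and its
increments are of order `exp (-c |n|)`, so it is of that order everywhere. Evaluated at the centre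
`n / 2` of the reflection it factors, and one of the factors is `O(exp (-c |n| / 2))`; this says
that, for a suitable sign `σ`, the difference `u (n - ·) - σ u` and its neighbouring value are that
small near `n / 2`. Reaching a fixed site `m` from `n / 2` takes about `|n| / 2` steps, over which
the transfer matrices amplify by at most `exp (L |n| / 2)`. If `𝓛(E) < L < c < δ(g)`, there are
infinitely many such `n`, and along them `|u m| ≤ |u (n - m)| + o(1) → 0`.
-/

lemma abs_le_or_abs_le_of_abs_mul_le_sq {a b q : ℝ} (hq : 0 ≤ q) (hab : |a * b| ≤ q ^ 2) :
    |a| ≤ q ∨ |b| ≤ q := by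
  by_contra! hlt
  rw [abs_mul, sq] at hab
  exact hab.not_gt (mul_lt_mul'' hlt.1 hlt.2 hq hq)

lemma tendsto_abs_intCast_cofinite : Tendsto (fun n : ℤ => |(n : ℝ)|) cofinite atTop :=
  tendsto_norm_cocompact_atTop.comp Int.tendsto_coe_cofinite

lemma tendsto_exp_mul_linear_mul_exp_neg {L c : ℝ} (hLc : L < c) (a b : ℝ) :
    Tendsto (fun x : ℝ => Real.exp (L * (x / 2 + a)) * (x / 2 + b) * Real.exp (-c * x / 2))
      atTop (nhds 0) := by
  set r := (c - L) / 2 with hr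
  have hr₀ : 0 < r := by linarith
  have hlin : Tendsto (fun x : ℝ => x * Real.exp (-r * x)) atTop (nhds 0) := by
    simpa using tendsto_rpow_mul_exp_neg_mul_atTop_nhds_zero 1 r hr₀
  have hconst : Tendsto (fun x : ℝ => Real.exp (-r * x)) atTop (nhds 0) := by
    simpa using tendsto_rpow_mul_exp_neg_mul_atTop_nhds_zero 0 r hr₀
  have hlim := ((hlin.div_const 2).add (hconst.const_mul b)).const_mul (Real.exp (L * a))
  simp only [zero_div, mul_zero, add_zero] at hlim
  refine hlim.congr fun x => ?_
  have hexp : Real.exp (L * (x / 2 + a)) * Real.exp (-c * x / 2) =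
      Real.exp (L * a) * Real.exp (-r * x) := by
    rw [← Real.exp_add, ← Real.exp_add, hr]
    ring_nf
  linear_combination -(x / 2 + b) * hexp

section MatNorm

variable (M : Matrix (Fin 2) (Fin 2) ℝ)

lemma matNorm_nonneg : 0 ≤ matNorm M := Real.iSup_nonneg fun _ => abs_nonneg _

lemma abs_entry_le_matNorm (i j : Fin 2) : |M i j| ≤ matNorm M :=
  le_ciSup (f := fun p : Fin 2 × Fin 2 => |M p.1 p.2|) (Set.finite_range _).bddAbove (i, j)

lemma abs_det_le_two_mul_matNorm_sq : |M.det| ≤ 2 * matNorm M ^ 2 := by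
  simpa using Matrix.det_le (abv := AbsoluteValue.abs) (abs_entry_le_matNorm M)

lemma norm_mulVec_le_two_mul_matNorm (x : Fin 2 → ℝ) : ‖M.mulVec x‖ ≤ 2 * matNorm M * ‖x‖ := by
  have hM := matNorm_nonneg M
  refine (pi_norm_le_iff_of_nonneg (by positivity)).2 fun i => ?_
  calc ‖M.mulVec x i‖ ≤ ∑ j, ‖M i j * x j‖ := norm_sum_le Finset.univ fun j => M i j * x j
    _ ≤ ∑ _j : Fin 2, matNorm M * ‖x‖ := by
      gcongr with j
      rw [norm_mul]
      gcongr
      exacts [abs_entry_le_matNorm M i j, norm_le_pi_norm x j]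
    _ = 2 * matNorm M * ‖x‖ := by simp [mul_assoc]

end MatNorm

section Lyapunov

/-- The growth rate over `n` steps whose limsup is the uniform Lyapunov exponent `LyapSup`. -/
def lyapunovAtScale (g : ℤ → ℝ) (E : ℝ) (n : ℕ) : ℝ :=
  ⨆ k : ℤ, Real.log (matNorm (transfer g E n k)) / n

variable {g : ℤ → ℝ} {E K L : ℝ}

lemma det_transfer (g : ℤ → ℝ) (E : ℝ) (n : ℕ) (k : ℤ) : (transfer g E n k).det = 1 := by
  induction n with
  | zero => simp [transfer]
  | succ n ih => rw [transfer, Matrix.det_mul, ih, Matrix.det_fin_two_of]; ring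

lemma half_le_matNorm_transfer (g : ℤ → ℝ) (E : ℝ) (n : ℕ) (k : ℤ) :
    1 / 2 ≤ matNorm (transfer g E n k) := by
  have hdet := abs_det_le_two_mul_matNorm_sq (transfer g E n k)
  rw [det_transfer, abs_one] at hdet
  nlinarith [matNorm_nonneg (transfer g E n k)]

lemma matNorm_transfer_pos (g : ℤ → ℝ) (E : ℝ) (n : ℕ) (k : ℤ) : 0 < matNorm (transfer g E n k) :=
  one_half_pos.trans_le (half_le_matNorm_transfer g E n k)

lemma matNorm_transfer_succ_le (hK : ∀ m, |E - g m| ≤ K) (n : ℕ) (k : ℤ) :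
    matNorm (transfer g E (n + 1) k) ≤ (K + 1) * matNorm (transfer g E n k) := by
  have hK₀ : 0 ≤ K := (abs_nonneg _).trans (hK 0)
  rw [transfer]
  set T := transfer g E n k
  refine ciSup_le fun ⟨i, j⟩ => ?_
  have h₀ := abs_entry_le_matNorm T 0 j
  have h₁ := abs_entry_le_matNorm T 1 j
  match i with
  | 0 =>
    calc |(!![E - g (k + n), -1; 1, 0] * T) 0 j|
        = |(E - g (k + n)) * T 0 j - T 1 j| := by simp [Matrix.mul_apply, sub_eq_add_neg]
      _ ≤ |E - g (k + n)| * |T 0 j| + |T 1 j| := (abs_sub _ _).trans_eq (by rw [abs_mul])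
      _ ≤ K * matNorm T + matNorm T := by gcongr; exact hK _
      _ = (K + 1) * matNorm T := by ring
  | 1 =>
    calc |(!![E - g (k + n), -1; 1, 0] * T) 1 j| = |T 0 j| := by simp [Matrix.mul_apply]
      _ ≤ matNorm T := h₀
      _ ≤ (K + 1) * matNorm T := le_mul_of_one_le_left (matNorm_nonneg T) (by linarith)

lemma matNorm_transfer_le_pow (hK : ∀ m, |E - g m| ≤ K) (n : ℕ) (k : ℤ) :
    matNorm (transfer g E n k) ≤ (K + 1) ^ n := by
  have hK₀ : 0 ≤ K := (abs_nonneg _).trans (hK 0)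
  induction n with
  | zero => exact ciSup_le fun ⟨i, j⟩ => by fin_cases i <;> fin_cases j <;> simp [transfer]
  | succ n ih =>
    calc matNorm (transfer g E (n + 1) k) ≤ (K + 1) * matNorm (transfer g E n k) :=
          matNorm_transfer_succ_le hK n k
      _ ≤ (K + 1) * (K + 1) ^ n := by gcongr
      _ = (K + 1) ^ (n + 1) := (pow_succ' _ _).symm

lemma log_matNorm_transfer_div_le (hK : ∀ m, |E - g m| ≤ K) (n : ℕ) (k : ℤ) :
    Real.log (matNorm (transfer g E n k)) / n ≤ Real.log (K + 1) := by
  have hK₀ : 0 ≤ K := (abs_nonneg _).trans (hK 0)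
  refine div_le_of_le_mul₀ n.cast_nonneg (Real.log_nonneg (by linarith)) ?_
  calc Real.log (matNorm (transfer g E n k)) ≤ Real.log ((K + 1) ^ n) :=
        Real.log_le_log (matNorm_transfer_pos g E n k) (matNorm_transfer_le_pow hK n k)
    _ = Real.log (K + 1) * n := by rw [Real.log_pow, mul_comm]

lemma log_matNorm_transfer_div_le_lyapunovAtScale (hK : ∀ m, |E - g m| ≤ K) (n : ℕ) (k : ℤ) :
    Real.log (matNorm (transfer g E n k)) / n ≤ lyapunovAtScale g E n :=
  le_ciSup (f := fun k => Real.log (matNorm (transfer g E n k)) / n)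
    ⟨Real.log (K + 1), Set.forall_mem_range.2 (log_matNorm_transfer_div_le hK n)⟩ k

lemma isBoundedUnder_lyapunovAtScale (hK : ∀ m, |E - g m| ≤ K) :
    IsBoundedUnder (· ≤ ·) atTop (lyapunovAtScale g E) :=
  isBoundedUnder_of ⟨Real.log (K + 1), fun n => ciSup_le (log_matNorm_transfer_div_le hK n)⟩

lemma lyapSup_nonneg (hK : ∀ m, |E - g m| ≤ K) : 0 ≤ LyapSup g E := by
  have hlower : ∀ n : ℕ, -Real.log 2 / n ≤ lyapunovAtScale g E n := fun n => by
    refine le_trans ?_ (log_matNorm_transfer_div_le_lyapunovAtScale hK n 0)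
    rw [← Real.log_inv, ← one_div]
    gcongr
    exact half_le_matNorm_transfer g E n 0
  have hlim : Tendsto (fun n : ℕ => -Real.log 2 / (n : ℝ)) atTop (nhds 0) :=
    tendsto_const_div_atTop_nhds_zero_nat _
  calc (0 : ℝ) = limsup (fun n : ℕ => -Real.log 2 / (n : ℝ)) atTop := hlim.limsup_eq.symm
    _ ≤ limsup (lyapunovAtScale g E) atTop :=
      limsup_le_limsup (Eventually.of_forall hlower) hlim.isCoboundedUnder_le
        (isBoundedUnder_lyapunovAtScale hK)

lemma exists_matNorm_transfer_le_mul_exp (hK : ∀ m, |E - g m| ≤ K) (hL : LyapSup g E < L) :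
    ∃ C : ℝ, ∀ (n : ℕ) (k : ℤ), matNorm (transfer g E n k) ≤ C * Real.exp (L * n) := by
  have hK₀ : 0 ≤ K := (abs_nonneg _).trans (hK 0)
  have hL₀ : 0 ≤ L := (lyapSup_nonneg hK).trans hL.le
  obtain ⟨P, hP⟩ := eventually_atTop.1 <|
    (eventually_lt_of_limsup_lt hL (isBoundedUnder_lyapunovAtScale hK)).and (eventually_gt_atTop 0)
  have hC : 1 ≤ (K + 1) ^ P := one_le_pow₀ (by linarith)
  refine ⟨(K + 1) ^ P, fun n k => ?_⟩
  rcases lt_or_ge n P with hn | hn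
  · calc matNorm (transfer g E n k) ≤ (K + 1) ^ n := matNorm_transfer_le_pow hK n k
      _ ≤ (K + 1) ^ P := pow_le_pow_right₀ (by linarith) hn.le
      _ ≤ (K + 1) ^ P * Real.exp (L * n) :=
        le_mul_of_one_le_right (by positivity) (Real.one_le_exp (by positivity))
  · obtain ⟨hscale, hn₀⟩ := hP n hn
    have hlog := (log_matNorm_transfer_div_le_lyapunovAtScale hK n k).trans hscale.le
    rw [div_le_iff₀ (Nat.cast_pos.2 hn₀)] at hlog
    calc matNorm (transfer g E n k) ≤ Real.exp (L * n) :=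
          (Real.log_le_iff_le_exp (matNorm_transfer_pos g E n k)).1 hlog
      _ ≤ (K + 1) ^ P * Real.exp (L * n) := le_mul_of_one_le_left (Real.exp_pos _).le hC

end Lyapunov

section ReflectionDist

variable {g : ℤ → ℝ} {M c : ℝ}

/-- The `ℓ^∞` distance from `g` to its reflection `m ↦ g (n - m)`, i.e. `d(RTⁿg, g)`; its
exponential decay rate along `n` is `deltaPot g`. -/
def reflectionDist (g : ℤ → ℝ) (n : ℤ) : ℝ := ⨆ m : ℤ, |g (n - m) - g m|

lemma reflectionDist_nonneg (g : ℤ → ℝ) (n : ℤ) : 0 ≤ reflectionDist g n :=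
  Real.iSup_nonneg fun _ => abs_nonneg _

lemma abs_reflect_sub_le (hM : ∀ m, |g m| ≤ M) (n m : ℤ) : |g (n - m) - g m| ≤ 2 * M :=
  (abs_sub _ _).trans (by linarith [hM (n - m), hM m])

lemma reflectionDist_le (hM : ∀ m, |g m| ≤ M) (n : ℤ) : reflectionDist g n ≤ 2 * M :=
  ciSup_le (abs_reflect_sub_le hM n)

lemma abs_reflect_sub_le_reflectionDist (hM : ∀ m, |g m| ≤ M) (n m : ℤ) :
    |g (n - m) - g m| ≤ reflectionDist g n :=
  le_ciSup (f := fun m => |g (n - m) - g m|)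
    ⟨2 * M, Set.forall_mem_range.2 (abs_reflect_sub_le hM n)⟩ m

lemma isCoboundedUnder_neg_log_reflectionDist_div (hM : ∀ m, |g m| ≤ M) :
    IsCoboundedUnder (· ≤ ·) cofinite
      fun n : ℤ => -Real.log (reflectionDist g n) / |(n : ℝ)| := by
  have hM₀ : 0 ≤ M := (abs_nonneg _).trans (hM 0)
  refine IsBoundedUnder.isCoboundedUnder_le <|
    isBoundedUnder_of_eventually_ge (a := -(2 * M)) ?_
  filter_upwards [eventually_cofinite_ne 0] with n hn
  have hn₁ : (1 : ℝ) ≤ |(n : ℝ)| := by exact_mod_cast Int.one_le_abs hn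
  rw [neg_div, neg_le_neg_iff]
  refine div_le_of_le_mul₀ (by positivity) (by positivity) ?_
  calc Real.log (reflectionDist g n) ≤ reflectionDist g n :=
        Real.log_le_self (reflectionDist_nonneg g n)
    _ ≤ 2 * M := reflectionDist_le hM n
    _ ≤ 2 * M * |(n : ℝ)| := le_mul_of_one_le_right (by positivity) hn₁

lemma frequently_reflectionDist_le_exp (hM : ∀ m, |g m| ≤ M) (hc : c < deltaPot g) :
    ∃ᶠ n : ℤ in cofinite, reflectionDist g n ≤ Real.exp (-c * |(n : ℝ)|) := by
  have hrate := frequently_lt_of_lt_limsup (isCoboundedUnder_neg_log_reflectionDist_div hM) hc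
  refine (hrate.and_eventually (eventually_cofinite_ne 0)).mono fun n ⟨hn, hn₀⟩ => ?_
  rw [lt_div_iff₀ (by positivity)] at hn
  rcases (reflectionDist_nonneg g n).eq_or_lt with hzero | hpos
  · rw [← hzero]
    positivity
  · exact (Real.log_le_iff_le_exp hpos).1 (by linarith)

end ReflectionDist

section SquareSummable

variable {ι : Type*} {u : ι → ℝ} {D : ℝ}

lemma abs_le_of_hasSum_sq (hD : 0 ≤ D) (hu : HasSum (fun i => u i ^ 2) (D ^ 2)) (i : ι) :
    |u i| ≤ D :=
  abs_le_of_sq_le_sq (le_hasSum hu i fun _ _ => sq_nonneg _) hD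

lemma tendsto_cofinite_zero_of_summable_sq (hu : Summable fun i => u i ^ 2) :
    Tendsto u cofinite (nhds 0) := by
  rw [tendsto_zero_iff_abs_tendsto_zero]
  simpa [Function.comp_def, Real.sqrt_sq_eq_abs] using hu.tendsto_cofinite_zero.sqrt

end SquareSummable

section Wronskian

/-- The discrete Wronskian of two sequences, independent of the site for two solutions of the same
eigenvalue equation. -/
def wronskian (u v : ℤ → ℝ) (m : ℤ) : ℝ := u (m + 1) * v m - u m * v (m + 1)

variable {g h u v : ℤ → ℝ} {E S A B : ℝ}

lemma wronskian_sub_wronskian_sub_one (hu : IsEigenfunction g E u) (hv : IsEigenfunction h E v)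
    (m : ℤ) : wronskian u v m - wronskian u v (m - 1) = (h m - g m) * (u m * v m) := by
  simp only [wronskian, sub_add_cancel]
  linear_combination v m * hu m - u m * hv m

lemma tendsto_wronskian (hu : Tendsto u cofinite (nhds 0)) (hv : Tendsto v cofinite (nhds 0)) :
    Tendsto (wronskian u v) cofinite (nhds 0) := by
  have hshift : Tendsto (fun m : ℤ => m + 1) cofinite cofinite :=
    (add_left_injective 1).tendsto_cofinite
  have hlim := ((hu.comp hshift).mul hv).sub (hu.mul (hv.comp hshift))
  rwa [mul_zero, sub_zero] at hlim

lemma abs_wronskian_le (hu : IsEigenfunction g E u) (hv : IsEigenfunction h E v)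
    (hA : HasSum (fun i => u i ^ 2) A) (hB : HasSum (fun i => v i ^ 2) B)
    (hS : ∀ m, |h m - g m| ≤ S) (m : ℤ) : |wronskian u v m| ≤ S * ((A + B) / 2) := by
  have hS₀ : 0 ≤ S := (abs_nonneg _).trans (hS 0)
  set d : ℤ → ℝ := fun i => S * ((u i ^ 2 + v i ^ 2) / 2)
  have hd : HasSum d (S * ((A + B) / 2)) := ((hA.add hB).div_const 2).mul_left S
  have hd₀ : ∀ i, 0 ≤ d i := fun i => by positivity
  have hstep : ∀ i, |wronskian u v i - wronskian u v (i - 1)| ≤ d i := fun i => by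
    rw [wronskian_sub_wronskian_sub_one hu hv, abs_mul]
    refine mul_le_mul (hS i) ?_ (abs_nonneg _) hS₀
    rw [abs_mul, ← sq_abs (u i), ← sq_abs (v i)]
    linarith [two_mul_le_add_sq |u i| |v i|]
  have hinj : Function.Injective fun p : ℕ => m - (p : ℤ) :=
    sub_right_injective.comp Nat.cast_injective
  have hlim : Tendsto (fun p : ℕ => wronskian u v (m - p)) atTop (nhds 0) := by
    rw [← Nat.cofinite_eq_atTop]
    exact (tendsto_wronskian (tendsto_cofinite_zero_of_summable_sq hA.summable)
      (tendsto_cofinite_zero_of_summable_sq hB.summable)).comp hinj.tendsto_cofinite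
  have htele := dist_le_tsum_of_dist_le_of_tendsto₀ (fun p : ℕ => d (m - p))
    (fun p => by simpa [Real.dist_eq, sub_sub] using hstep (m - p))
    (hd.summable.comp_injective hinj) hlim
  calc |wronskian u v m| ≤ ∑' p : ℕ, d (m - p) := by simpa using htele
    _ ≤ ∑' i, d i := tsum_comp_le_tsum_of_inj hd.summable hd₀ hinj
    _ = S * ((A + B) / 2) := hd.tsum_eq

end Wronskian

section ForcedSolution

/-- `w` solves the inhomogeneous equation `(H_g - E) w = f`. -/
def IsForcedSolution (g : ℤ → ℝ) (E : ℝ) (f w : ℤ → ℝ) : Prop :=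
  ∀ m : ℤ, w (m + 1) + w (m - 1) + g m * w m = E * w m + f m

/-- The Cauchy data of `w` at site `k`, the vector on which the transfer matrices starting at `k`
act. It carries the sup norm of `Fin 2 → ℝ`. -/
def cauchyData (w : ℤ → ℝ) (k : ℤ) : Fin 2 → ℝ := ![w k, w (k - 1)]

lemma norm_cauchyData_le_iff {w : ℤ → ℝ} {k : ℤ} {r : ℝ} (hr : 0 ≤ r) :
    ‖cauchyData w k‖ ≤ r ↔ |w k| ≤ r ∧ |w (k - 1)| ≤ r := by
  simp [cauchyData, pi_norm_le_iff_of_nonneg hr]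

variable {g h f u v w : ℤ → ℝ} {E C L b : ℝ}

lemma IsEigenfunction.isForcedSolution_sub_mul (hu : IsEigenfunction g E u)
    (hv : IsEigenfunction h E v) (σ : ℝ) :
    IsForcedSolution g E (fun m => (g m - h m) * v m) (fun m => v m - σ * u m) := fun m => by
  linear_combination hv m - σ * hu m

lemma IsForcedSolution.cauchyData_add_one (hw : IsForcedSolution g E f w) (k : ℤ) :
    cauchyData w (k + 1) =
      Matrix.mulVec !![E - g k, -1; 1, 0] (cauchyData w k) + ![f k, 0] := by
  ext i
  fin_cases i
  · simp [cauchyData]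
    linear_combination hw k
  · simp [cauchyData]

lemma IsForcedSolution.duhamel (hw : IsForcedSolution g E f w) (k : ℤ) (n : ℕ) :
    cauchyData w (k + n) = (transfer g E n k).mulVec (cauchyData w k) +
      ∑ i ∈ Finset.range n, (transfer g E (n - (i + 1)) (k + i + 1)).mulVec ![f (k + i), 0] := by
  induction n with
  | zero => simp [transfer]
  | succ n ih =>
    have hterm : ∀ i ∈ Finset.range n,
        Matrix.mulVec !![E - g (k + n), -1; 1, 0]
          ((transfer g E (n - (i + 1)) (k + i + 1)).mulVec ![f (k + i), 0]) =
        (transfer g E (n + 1 - (i + 1)) (k + i + 1)).mulVec ![f (k + i), 0] := fun i hi => by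
      have hin : i + 1 ≤ n := Finset.mem_range.1 hi
      have hsite : k + i + 1 + ((n - (i + 1) : ℕ) : ℤ) = k + n := by omega
      rw [Nat.sub_add_comm hin, transfer, hsite, Matrix.mulVec_mulVec]
    rw [Nat.cast_succ, ← add_assoc, hw.cauchyData_add_one, ih, Matrix.mulVec_add,
      Matrix.mulVec_sum, Matrix.mulVec_mulVec, ← transfer, Finset.sum_congr rfl hterm,
      Finset.sum_range_succ, Nat.sub_self]
    simp [transfer, add_assoc]

lemma IsForcedSolution.norm_cauchyData_le (hw : IsForcedSolution g E f w)
    (hT : ∀ (n : ℕ) (k : ℤ), matNorm (transfer g E n k) ≤ C * Real.exp (L * n)) (hL : 0 ≤ L)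
    (hf : ∀ m, |f m| ≤ b) (k : ℤ) (n : ℕ) :
    ‖cauchyData w (k + n)‖ ≤ 2 * C * Real.exp (L * n) * (‖cauchyData w k‖ + n * b) := by
  have hC : 0 ≤ C := by simpa using (matNorm_nonneg _).trans (hT 0 0)
  have hb : 0 ≤ b := (abs_nonneg _).trans (hf 0)
  have hgrowth : ∀ p ≤ n, ∀ (l : ℤ) (x : Fin 2 → ℝ),
      ‖(transfer g E p l).mulVec x‖ ≤ 2 * C * Real.exp (L * n) * ‖x‖ := fun p hp l x =>
    calc ‖(transfer g E p l).mulVec x‖ ≤ 2 * matNorm (transfer g E p l) * ‖x‖ :=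
          norm_mulVec_le_two_mul_matNorm _ x
      _ ≤ 2 * (C * Real.exp (L * p)) * ‖x‖ := by gcongr; exact hT p l
      _ ≤ 2 * (C * Real.exp (L * n)) * ‖x‖ := by gcongr
      _ = 2 * C * Real.exp (L * n) * ‖x‖ := by ring
  have hforce : ∀ m, ‖![f m, 0]‖ ≤ b := fun m => by
    simpa [pi_norm_le_iff_of_nonneg hb, hb] using hf m
  rw [hw.duhamel]
  calc _ ≤ 2 * C * Real.exp (L * n) * ‖cauchyData w k‖ +
        ∑ _i ∈ Finset.range n, 2 * C * Real.exp (L * n) * b := by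
        refine norm_add_le_of_le (hgrowth n le_rfl _ _) (norm_sum_le_of_le _ fun i _ => ?_)
        refine (hgrowth _ (Nat.sub_le _ _) _ _).trans ?_
        gcongr
        exact hforce _
    _ = 2 * C * Real.exp (L * n) * (‖cauchyData w k‖ + n * b) := by
        rw [Finset.sum_const, Finset.card_range, nsmul_eq_mul]
        ring

end ForcedSolution

section Reflection

/-- The failure of `u` to be symmetric (for `σ = 1`) or antisymmetric (for `σ = -1`) under the
reflection about `n / 2`. -/
def reflectionDefect (σ : ℝ) (u : ℤ → ℝ) (n m : ℤ) : ℝ := u (n - m) - σ * u m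

variable {g u : ℤ → ℝ} {E K D C L c s q σ : ℝ} {n : ℤ}

lemma abs_reflectionDefect_reflect (hσ : |σ| = 1) (u : ℤ → ℝ) (n m : ℤ) :
    |reflectionDefect σ u n (n - m)| = |reflectionDefect σ u n m| := by
  have hσσ : σ * σ = 1 := by rw [← abs_mul_abs_self, hσ, one_mul]
  have hodd : reflectionDefect σ u n (n - m) = -σ * reflectionDefect σ u n m := by
    simp only [reflectionDefect, sub_sub_cancel]
    linear_combination -u m * hσσ
  rw [hodd, abs_mul, abs_neg, hσ, one_mul]

lemma IsEigenfunction.reflect (hu : IsEigenfunction g E u) (n : ℤ) :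
    IsEigenfunction (fun m => g (n - m)) E fun m => u (n - m) := fun m => by
  have hm := hu (n - m)
  rw [sub_add, sub_sub] at hm
  linear_combination hm

lemma exists_sign_reflectionDefect_le_even (hK : ∀ m, |E - g m| ≤ K) (hu : IsEigenfunction g E u)
    (hq : 0 ≤ q) (j : ℤ) (hW : |wronskian u (fun m => u (2 * j - m)) j| ≤ q ^ 2) :
    ∃ σ : ℝ, |σ| = 1 ∧ ‖cauchyData (reflectionDefect σ u (2 * j)) (j + 1)‖ ≤ (K + 2) * q := by
  have hK₀ : 0 ≤ K := (abs_nonneg _).trans (hK 0)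
  have hr : 0 ≤ (K + 2) * q := by positivity
  have hj : 2 * j - j = j := by ring
  have hj₁ : 2 * j - (j + 1) = j - 1 := by ring
  have hfactor : wronskian u (fun m => u (2 * j - m)) j = u j * (u (j + 1) - u (j - 1)) := by
    simp only [wronskian, hj, hj₁]
    ring
  rw [hfactor] at hW
  simp only [norm_cauchyData_le_iff hr, reflectionDefect, add_sub_cancel_right, hj, hj₁]
  rcases abs_le_or_abs_le_of_abs_mul_le_sq hq hW with hval | hdiff
  · refine ⟨-1, by simp, ?_, ?_⟩
    · calc |u (j - 1) - -1 * u (j + 1)| = |E - g j| * |u j| := by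
            rw [← abs_mul]
            congr 1
            linear_combination hu j
        _ ≤ (K + 2) * q := by gcongr; linarith [hK j]
    · calc |u j - -1 * u j| = 2 * |u j| := by rw [← abs_two, ← abs_mul]; ring_nf
        _ ≤ (K + 2) * q := by gcongr; linarith
  · refine ⟨1, abs_one, ?_, by simpa using hr⟩
    rw [one_mul, abs_sub_comm]
    exact hdiff.trans (le_mul_of_one_le_left hq (by linarith))

lemma exists_sign_reflectionDefect_le_odd (hq : 0 ≤ q) (j : ℤ)
    (hW : |wronskian u (fun m => u (2 * j + 1 - m)) j| ≤ q ^ 2) :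
    ∃ σ : ℝ, |σ| = 1 ∧ ‖cauchyData (reflectionDefect σ u (2 * j + 1)) (j + 1)‖ ≤ q := by
  have hj : 2 * j + 1 - j = j + 1 := by ring
  have hj₁ : 2 * j + 1 - (j + 1) = j := by ring
  have hfactor : wronskian u (fun m => u (2 * j + 1 - m)) j =
      (u (j + 1) - u j) * (u (j + 1) + u j) := by
    simp only [wronskian, hj, hj₁]
    ring
  rw [hfactor] at hW
  simp only [norm_cauchyData_le_iff hq, reflectionDefect, add_sub_cancel_right, hj, hj₁]
  rcases abs_le_or_abs_le_of_abs_mul_le_sq hq hW with hdiff | hsum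
  · exact ⟨1, abs_one, by rwa [one_mul, abs_sub_comm], by rwa [one_mul]⟩
  · exact ⟨-1, by simp, by rwa [neg_one_mul, sub_neg_eq_add, add_comm],
      by rwa [neg_one_mul, sub_neg_eq_add]⟩

lemma exists_sign_reflectionDefect_le (hK : ∀ m, |E - g m| ≤ K) (hu : IsEigenfunction g E u)
    (hq : 0 ≤ q) (hW : |wronskian u (fun m => u (n - m)) (n / 2)| ≤ q ^ 2) :
    ∃ σ : ℝ, |σ| = 1 ∧ ‖cauchyData (reflectionDefect σ u n) (n / 2 + 1)‖ ≤ (K + 2) * q := by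
  have hK₀ : 0 ≤ K := (abs_nonneg _).trans (hK 0)
  obtain ⟨j, rfl | rfl⟩ := Int.even_or_odd' n
  · rw [show 2 * j / 2 = j by omega] at hW ⊢
    exact exists_sign_reflectionDefect_le_even hK hu hq j hW
  · rw [show (2 * j + 1) / 2 = j by omega] at hW ⊢
    obtain ⟨σ, hσ, hle⟩ := exists_sign_reflectionDefect_le_odd hq j hW
    exact ⟨σ, hσ, hle.trans (le_mul_of_one_le_left hq (by linarith))⟩

lemma exists_sign_abs_reflectionDefect_le (hK : ∀ m, |E - g m| ≤ K) (hu : IsEigenfunction g E u)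
    (hD : 0 ≤ D) (huD : HasSum (fun i => u i ^ 2) (D ^ 2))
    (hT : ∀ (n : ℕ) (k : ℤ), matNorm (transfer g E n k) ≤ C * Real.exp (L * n)) (hL : 0 ≤ L)
    (hs : 0 ≤ s) (hgs : ∀ m, |g (n - m) - g m| ≤ s ^ 2) :
    ∃ σ : ℝ, |σ| = 1 ∧ ∀ N : ℕ, |reflectionDefect σ u n (n / 2 + N)| ≤
      2 * C * Real.exp (L * N) * ((K + 2) * (D * s) + N * (s ^ 2 * D)) := by
  have hC : 0 ≤ C := by simpa using (matNorm_nonneg _).trans (hT 0 0)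
  have hW : |wronskian u (fun m => u (n - m)) (n / 2)| ≤ (D * s) ^ 2 :=
    (abs_wronskian_le hu (hu.reflect n) huD ((Equiv.subLeft n).hasSum_iff.2 huD) hgs
      _).trans_eq (by ring)
  obtain ⟨σ, hσ, hcentre⟩ := exists_sign_reflectionDefect_le hK hu (by positivity) hW
  refine ⟨σ, hσ, fun N => ?_⟩
  have hforce : ∀ m, |(g m - g (n - m)) * u (n - m)| ≤ s ^ 2 * D := fun m => by
    rw [abs_mul, abs_sub_comm]
    gcongr
    exacts [hgs m, abs_le_of_hasSum_sq hD huD _]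
  have hdefect : IsForcedSolution g E (fun m => (g m - g (n - m)) * u (n - m))
      (reflectionDefect σ u n) := hu.isForcedSolution_sub_mul (hu.reflect n) σ
  calc |reflectionDefect σ u n (n / 2 + N)|
      ≤ ‖cauchyData (reflectionDefect σ u n) (n / 2 + 1 + N)‖ := by
        have hsite : n / 2 + 1 + (N : ℤ) - 1 = n / 2 + N := by ring
        exact hsite ▸ ((norm_cauchyData_le_iff (norm_nonneg _)).1 le_rfl).2
    _ ≤ 2 * C * Real.exp (L * N) *
        (‖cauchyData (reflectionDefect σ u n) (n / 2 + 1)‖ + N * (s ^ 2 * D)) :=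
      hdefect.norm_cauchyData_le hT hL hforce _ N
    _ ≤ _ := by gcongr

lemma exists_nat_half_add_eq (n m : ℤ) :
    ∃ N : ℕ, (N : ℝ) ≤ |(n : ℝ)| / 2 + (|(m : ℝ)| + 1) ∧ (n / 2 + N = m ∨ n / 2 + N = n - m) := by
  have hcast : ∀ N : ℕ, 2 * (N : ℤ) ≤ |n| + 2 * (|m| + 1) →
      (N : ℝ) ≤ |(n : ℝ)| / 2 + (|(m : ℝ)| + 1) := fun N hN => by
    have : 2 * (N : ℝ) ≤ |(n : ℝ)| + 2 * (|(m : ℝ)| + 1) := by exact_mod_cast hN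
    linarith
  have hn := le_abs_self n
  have hn' := neg_abs_le n
  have hm := le_abs_self m
  have hm' := neg_abs_le m
  rcases le_total (n / 2) m with hle | hle
  · exact ⟨(m - n / 2).toNat, hcast _ (by omega), by omega⟩
  · exact ⟨(n - m - n / 2).toNat, hcast _ (by omega), by omega⟩

lemma abs_le_abs_reflect_add_abs_reflectionDefect (hσ : |σ| = 1) (u : ℤ → ℝ) (n m : ℤ) :
    |u m| ≤ |u (n - m)| + |reflectionDefect σ u n m| := by
  have htriangle := abs_sub_abs_le_abs_sub (σ * u m) (u (n - m))
  rw [abs_mul, hσ, one_mul] at htriangle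
  rw [reflectionDefect, abs_sub_comm]
  linarith

lemma abs_le_abs_reflect_add (hK : ∀ m, |E - g m| ≤ K) (hu : IsEigenfunction g E u)
    (hD : 0 ≤ D) (huD : HasSum (fun i => u i ^ 2) (D ^ 2))
    (hT : ∀ (n : ℕ) (k : ℤ), matNorm (transfer g E n k) ≤ C * Real.exp (L * n)) (hL : 0 ≤ L)
    (hc : 0 ≤ c) (hgc : ∀ m, |g (n - m) - g m| ≤ Real.exp (-c * |(n : ℝ)|)) (m : ℤ) :
    |u m| ≤ |u (n - m)| + 2 * C * D * (Real.exp (L * (|(n : ℝ)| / 2 + (|(m : ℝ)| + 1))) *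
      (|(n : ℝ)| / 2 + (|(m : ℝ)| + K + 3)) * Real.exp (-c * |(n : ℝ)| / 2)) := by
  have hC : 0 ≤ C := by simpa using (matNorm_nonneg _).trans (hT 0 0)
  have hK₀ : 0 ≤ K := (abs_nonneg _).trans (hK 0)
  set s := Real.exp (-c * |(n : ℝ)| / 2) with hs
  have hs₀ : 0 ≤ s := (Real.exp_pos _).le
  have hs₁ : s ≤ 1 := Real.exp_le_one_iff.2 (by linarith [mul_nonneg hc (abs_nonneg (n : ℝ))])
  have hs₂ : s ^ 2 ≤ s := pow_le_of_le_one hs₀ hs₁ two_ne_zero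
  have hgs : ∀ m, |g (n - m) - g m| ≤ s ^ 2 := fun m =>
    (hgc m).trans_eq (by rw [hs, ← Real.exp_nat_mul]; ring_nf)
  obtain ⟨σ, hσ, hdefect⟩ := exists_sign_abs_reflectionDefect_le hK hu hD huD hT hL hs₀ hgs
  obtain ⟨N, hN, hsite⟩ := exists_nat_half_add_eq n m
  have hreach : |reflectionDefect σ u n m| = |reflectionDefect σ u n (n / 2 + N)| := by
    rcases hsite with hsite | hsite
    · rw [hsite]
    · rw [hsite, abs_reflectionDefect_reflect hσ]
  calc |u m| ≤ |u (n - m)| + |reflectionDefect σ u n (n / 2 + N)| :=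
        hreach ▸ abs_le_abs_reflect_add_abs_reflectionDefect hσ u n m
    _ ≤ |u (n - m)| + 2 * C * Real.exp (L * N) * ((K + 2) * (D * s) + N * (s * D)) := by
      grw [hdefect N, hs₂]
    _ = |u (n - m)| + 2 * C * D * (Real.exp (L * N) * (N + (K + 2)) * s) := by ring
    _ ≤ _ := by
      have hNK : N + (K + 2) ≤ |(n : ℝ)| / 2 + (|(m : ℝ)| + K + 3) := by linarith
      gcongr

end Reflection

theorem no_point_spectrum_above_Lyapunov
    (g : ℤ → ℝ) (hg : ∃ M : ℝ, ∀ n : ℤ, |g n| ≤ M)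
    (E : ℝ) (hδ : LyapSup g E < deltaPot g)
    (u : lp (fun _ : ℤ => ℝ) 2)
    (hu : IsEigenfunction g E (fun n => u n)) :
    u = 0 := by
  obtain ⟨M, hM⟩ := hg
  obtain ⟨L, hL, hLδ⟩ := exists_between hδ
  obtain ⟨c, hLc, hc⟩ := exists_between hLδ
  have hK : ∀ m, |E - g m| ≤ |E| + M := fun m => (abs_sub _ _).trans (by gcongr; exact hM m)
  have hL₀ : 0 ≤ L := (lyapSup_nonneg hK).trans hL.le
  obtain ⟨C, hT⟩ := exists_matNorm_transfer_le_mul_exp hK hL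
  have hu₂ : HasSum (fun i => u i ^ 2) (‖u‖ ^ 2) := by simpa using lp.hasSum_norm (by simp) u
  ext m
  have hreflect : Tendsto (fun n : ℤ => u (n - m)) cofinite (nhds 0) :=
    (tendsto_cofinite_zero_of_summable_sq hu₂.summable).comp sub_left_injective.tendsto_cofinite
  have hdefect := ((tendsto_exp_mul_linear_mul_exp_neg hLc (|(m : ℝ)| + 1)
    (|(m : ℝ)| + (|E| + M) + 3)).comp tendsto_abs_intCast_cofinite).const_mul (2 * C * ‖u‖)
  have hlim := hreflect.abs.add hdefect
  rw [abs_zero, mul_zero, add_zero] at hlim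
  refine abs_nonpos_iff.1 (ge_of_tendsto_of_frequently hlim ?_)
  exact (frequently_reflectionDist_le_exp hM hc).mono fun n hn =>
    abs_le_abs_reflect_add hK hu (norm_nonneg u) hu₂ hT hL₀ (hL₀.trans hLc.le)
      (fun k => (abs_reflect_sub_le_reflectionDist hM n k).trans hn) m
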